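/- arXiv:0911.1702 — 4 statements merged into one kernel-verified Lean document; each statement's English description precedes it below -/
import Mathlib

section
/- Let X and Y be metric spaces with X complete, and let F be a multivalued map from X to Y. Suppose that: (i) F is almost lower semicontinuous; (ii) for every y ∈ Y the full preimage F⁻(y) is closed in X but contains no open ball; (iii) F is topologically closed. Then F is proper, i.e., for every compact set B ⊆ Y the full preimage F⁻(B) = {x ∈ X : F(x) ∩ B ≠ ∅} is compact. -/
/-!
Properness is proved sequentially. Given `x n` in the preimage of a compact `B`, choose
`y n ∈ F (x n) ∩ B` and pass to a subsequence with `y n → b ∈ B`. Almost lower semicontinuity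
provides an open ball near `x n` all of whose points have values near `y n`; as this ball is not
contained in the preimage of `b`, there is `u n` in it with `b ∉ F (u n)` and a value
`v n ∈ F (u n)` near `y n`. Thus `v n → b`. The image of `closure (range u)` is closed and contains
all `v n`, hence contains `b`, so `b ∈ F a` for some `a ∈ closure (range u)`. Since `a` is none of
the `u n`, a subsequence of `u`, and therefore of `x`, converges to `a ∈ F⁻(B)`.
-/

open Metric Set Filter Topology

/-- Full preimage of a set under a multivalued map. -/
def mvPreimage {X Y : Type*} (F : X → Set Y) (B : Set Y) : Set X :=
  {x | (F x ∩ B).Nonempty}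

/-- Full preimage of a point under a multivalued map. -/
def mvPreimagePt {X Y : Type*} (F : X → Set Y) (y : Y) : Set X :=
  {x | y ∈ F x}

/-- Image of a set under a multivalued map. -/
def mvImage {X Y : Type*} (F : X → Set Y) (A : Set X) : Set Y :=
  {y | ∃ x ∈ A, y ∈ F x}

/-- A set is uniformly solid if its intersection with any open ball is either
empty or contains an open ball. -/
def UniformlySolid {X : Type*} [MetricSpace X] (S : Set X) : Prop :=
  ∀ c : X, ∀ r : ℝ, 0 < r → (S ∩ Metric.ball c r).Nonempty →
    ∃ c' : X, ∃ r' : ℝ, 0 < r' ∧ Metric.ball c' r' ⊆ S ∩ Metric.ball c r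

/-- A point adherent to the range of a sequence but not in it is a subsequential limit:
finitely many terms can be removed from any of its neighbourhoods. -/
lemma exists_subseq_of_mem_closure_range {X : Type*} [MetricSpace X] {u : ℕ → X} {a : X}
    (ha : a ∈ closure (range u)) (hau : ∀ n, u n ≠ a) :
    ∃ φ : ℕ → ℕ, StrictMono φ ∧ Tendsto (u ∘ φ) atTop (𝓝 a) := by
  have hcl : MapClusterPt a atTop u := by
    rw [mapClusterPt_iff_frequently]
    intro s hs
    rw [frequently_atTop]
    intro N
    have hfin : (u '' Iio N).Finite := (finite_Iio N).image u
    have hmem : (u '' Iio N)ᶜ ∈ 𝓝 a := by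
      refine hfin.isClosed.isOpen_compl.mem_nhds ?_
      rintro ⟨n, -, hn⟩
      exact hau n hn
    obtain ⟨z, ⟨hzs, hzN⟩, n, rfl⟩ := mem_closure_iff_nhds.1 ha _ (inter_mem hs hmem)
    refine ⟨n, ?_, hzs⟩
    by_contra hn
    exact hzN ⟨n, not_le.1 hn, rfl⟩
  exact MapClusterPt.tendsto_subseq hcl

/-- An almost lower semicontinuous, topologically closed multivalued
map on a complete metric space whose point preimages are closed and contain no
open ball is proper. -/
theorem statement0 {X Y : Type*} [MetricSpace X] [MetricSpace Y] [CompleteSpace X]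
    (F : X → Set Y) (hne : ∀ x, (F x).Nonempty)
    (halsc : ∀ B : Set Y, IsOpen B → UniformlySolid (mvPreimage F B))
    (hclosed : ∀ y : Y, IsClosed (mvPreimagePt F y))
    (hnoball : ∀ y : Y, ∀ c : X, ∀ r : ℝ, 0 < r → ¬ Metric.ball c r ⊆ mvPreimagePt F y)
    (htc : ∀ A : Set X, IsClosed A → IsClosed (mvImage F A)) :
    ∀ B : Set Y, IsCompact B → IsCompact (mvPreimage F B) := by
  intro B hB
  refine IsSeqCompact.isCompact ?_
  intro x₀ hx₀
  choose y₀ hy₀ using hx₀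
  obtain ⟨b, hbB, φ, hφ, hyb⟩ := hB.tendsto_subseq (fun n => (hy₀ n).2)
  have key : ∀ n : ℕ, ∃ u : X, ∃ v : Y, v ∈ F u ∧ b ∉ F u ∧
      dist u (x₀ (φ n)) < 1 / ((n : ℝ) + 1) ∧ dist v (y₀ (φ n)) < 1 / ((n : ℝ) + 1) := by
    intro n
    have hpos : 0 < 1 / ((n : ℝ) + 1) := Nat.one_div_pos_of_nat
    obtain ⟨c, r, hr, hsub⟩ :=
      halsc (ball (y₀ (φ n)) (1 / ((n : ℝ) + 1))) isOpen_ball (x₀ (φ n)) _ hpos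
        ⟨x₀ (φ n), ⟨y₀ (φ n), (hy₀ (φ n)).1, mem_ball_self hpos⟩, mem_ball_self hpos⟩
    obtain ⟨u, hu, hub⟩ := not_subset.1 (hnoball b c r hr)
    obtain ⟨⟨v, hvF, hv⟩, hux⟩ := hsub hu
    exact ⟨u, v, hvF, hub, hux, hv⟩
  choose u v hvF hbu hux hvy using key
  have hsmall : Tendsto (fun n : ℕ => 1 / ((n : ℝ) + 1)) atTop (𝓝 0) :=
    tendsto_one_div_add_atTop_nhds_zero_nat
  have hvy0 : Tendsto (fun n => dist (v n) (y₀ (φ n))) atTop (𝓝 0) :=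
    squeeze_zero (fun _ => dist_nonneg) (fun n => (hvy n).le) hsmall
  have hux0 : Tendsto (fun n => dist (u n) (x₀ (φ n))) atTop (𝓝 0) :=
    squeeze_zero (fun _ => dist_nonneg) (fun n => (hux n).le) hsmall
  have hvb : Tendsto v atTop (𝓝 b) := (tendsto_iff_of_dist hvy0).2 hyb
  obtain ⟨a, ha, hba⟩ : b ∈ mvImage F (closure (range u)) :=
    (htc _ isClosed_closure).mem_of_tendsto hvb
      (Eventually.of_forall fun n => ⟨u n, subset_closure (mem_range_self n), hvF n⟩)
  obtain ⟨ψ, hψ, hua⟩ := exists_subseq_of_mem_closure_range ha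
    (fun n hn => hbu n (hn ▸ hba))
  exact ⟨a, ⟨b, hba, hbB⟩, φ ∘ ψ, hφ.comp hψ,
    (tendsto_iff_of_dist (hux0.comp hψ.tendsto_atTop)).1 hua⟩
end

section
/- Let X and Y be metric spaces with X complete, and let F be a multivalued map from X to Y. Suppose that F is almost lower semicontinuous, F is topologically closed, and for every y ∈ Y the full preimage F⁻(y) = {x ∈ X : y ∈ F(x)} contains no open ball. Then for every y₀ ∈ Y the set F⁻(y₀) is relatively compact in X (its closure is compact). -/
/-!
If `F⁻(y₀)` is not totally bounded, it contains an `ε`-separated sequence `x n`. By almost lower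
semicontinuity, within `ε / 3` of `x n` there is a ball on which `F` meets `ball y₀ (1 / (n + 1))`;
since this ball is not contained in `F⁻(y₀)`, it holds a point `z n` with `y₀ ∉ F (z n)`. The `z n`
are `ε / 3`-separated, so their range is closed and so is its image under `F`. That image contains
points arbitrarily close to `y₀`, hence `y₀` itself, contradicting `y₀ ∉ F (z n)` for all `n`.
Total boundedness gives a compact closure because `X` is complete.
-/

open Metric Set Filter Topology

/-- A set that is not totally bounded contains a uniformly separated sequence. -/
lemma exists_separated_seq {X : Type*} [MetricSpace X] {S : Set X} (hS : ¬ TotallyBounded S) :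
    ∃ ε > 0, ∃ x : ℕ → X, (∀ n, x n ∈ S) ∧ ∀ m n, m ≠ n → ε ≤ dist (x m) (x n) := by
  rw [Metric.totallyBounded_iff] at hS
  push Not at hS
  obtain ⟨ε, hε, h⟩ := hS
  obtain ⟨x, hxS, hx⟩ := exists_seq_of_forall_finset_exists (fun a => a ∈ S)
    (fun a b => ε ≤ dist a b) (fun s _ => by
      obtain ⟨b, hbS, hb⟩ := Set.not_subset.1 (h s s.finite_toSet)
      refine ⟨b, hbS, fun a ha => ?_⟩
      by_contra hlt
      refine hb (Set.mem_biUnion (Finset.mem_coe.2 ha) ?_)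
      rw [Metric.mem_ball, dist_comm]
      exact not_le.1 hlt)
  refine ⟨ε, hε, x, hxS, fun m n hmn => ?_⟩
  rcases lt_or_gt_of_ne hmn with hlt | hlt
  · exact hx m n hlt
  · rw [dist_comm]
    exact hx n m hlt

/-- under the hypotheses of the main theorem (minus closedness of
point preimages), every point preimage is relatively compact. -/
theorem statement4 {X Y : Type*} [MetricSpace X] [MetricSpace Y] [CompleteSpace X]
    (F : X → Set Y) (hne : ∀ x, (F x).Nonempty)
    (halsc : ∀ B : Set Y, IsOpen B → UniformlySolid (mvPreimage F B))
    (htc : ∀ A : Set X, IsClosed A → IsClosed (mvImage F A))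
    (hnoball : ∀ y : Y, ∀ c : X, ∀ r : ℝ, 0 < r → ¬ Metric.ball c r ⊆ mvPreimagePt F y) :
    ∀ y₀ : Y, IsCompact (closure (mvPreimagePt F y₀)) := by
  intro y₀
  suffices hT : TotallyBounded (mvPreimagePt F y₀) from
    hT.closure.isCompact_of_isClosed isClosed_closure
  by_contra hT
  obtain ⟨ε, hε, x, hxS, hx⟩ := exists_separated_seq hT
  have key : ∀ n : ℕ, ∃ z, dist z (x n) < ε / 3 ∧ y₀ ∉ F z ∧
      ∃ y ∈ F z, dist y y₀ < 1 / ((n : ℝ) + 1) := by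
    intro n
    obtain ⟨c, r, hr, hsub⟩ := halsc (ball y₀ (1 / ((n : ℝ) + 1))) isOpen_ball (x n) (ε / 3)
      (by positivity)
      ⟨x n, ⟨y₀, hxS n, mem_ball_self (by positivity)⟩, mem_ball_self (by positivity)⟩
    obtain ⟨z, hz, hzy⟩ := Set.not_subset.1 (hnoball y₀ c r hr)
    obtain ⟨⟨y, hyF, hyB⟩, hzx⟩ := hsub hz
    exact ⟨z, hzx, hzy, y, hyF, hyB⟩
  choose z hzx hzy y hyF hy using key
  have hsep : Pairwise fun m n => ε / 3 ≤ dist (z m) (z n) := by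
    intro m n hmn
    have h1 := hx m n hmn
    have h2 := dist_triangle4 (x m) (z m) (z n) (x n)
    have h3 := hzx m
    have h4 := hzx n
    rw [dist_comm] at h3
    linarith
  have hclosed : IsClosed (range z) :=
    (isClosedEmbedding_of_pairwise_le_dist (by positivity) hsep).isClosed_range
  have hlim : Tendsto y atTop (𝓝 y₀) := by
    rw [tendsto_iff_dist_tendsto_zero]
    exact squeeze_zero (fun _ => dist_nonneg) (fun n => (hy n).le)
      tendsto_one_div_add_atTop_nhds_zero_nat
  obtain ⟨_, ⟨n, rfl⟩, hn⟩ : y₀ ∈ mvImage F (range z) :=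
    (htc _ hclosed).mem_of_tendsto hlim
      (Eventually.of_forall fun n => ⟨z n, mem_range_self n, hyF n⟩)
  exact hzy n hn
end

section
/- Define the multivalued map F from ℝ to ℝ by F(x) = {|x|+1} if |x| > 1, F(x) = {|x|+1, 1−|x|} if |x| = 1, and F(x) = {|x|+1, 1−|x|, |x|−1} if |x| < 1. Then F is topologically closed: for every closed set A ⊆ ℝ, the image F(A) = {y ∈ ℝ : ∃ x ∈ A, y ∈ F(x)} is closed. -/
/-!
The image `F(A)` is a union of three closed sets, one per branch. The branch `|x| + 1` is defined
on all of `A`, and contributes `{y ≥ 1 | y - 1 ∈ A or 1 - y ∈ A}`. The branches `1 - |x|` and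
`|x| - 1` coincide when `|x| = 1`, so their values are the continuous images of the compact set
`[-1, 1] ∩ A`.
-/

open Metric Set Filter Topology

/-- the piecewise map is topologically closed. -/
theorem statement11 (F : ℝ → Set ℝ)
    (hF1 : ∀ x : ℝ, 1 < |x| → F x = {|x| + 1})
    (hF2 : ∀ x : ℝ, |x| = 1 → F x = {|x| + 1, 1 - |x|})
    (hF3 : ∀ x : ℝ, |x| < 1 → F x = {|x| + 1, 1 - |x|, |x| - 1}) :
    ∀ A : Set ℝ, IsClosed A → IsClosed (mvImage F A) := by
  intro A hA
  -- At `|x| = 1` the branches `1 - |x|` and `|x| - 1` agree, so both extend to `|x| ≤ 1`.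
  have key : mvImage F A = (Ici 1 ∩ ((fun y => y - 1) ⁻¹' A ∪ (fun y => 1 - y) ⁻¹' A)) ∪
      ((fun x : ℝ => 1 - |x|) '' (Icc (-1) 1 ∩ A) ∪
        (fun x : ℝ => |x| - 1) '' (Icc (-1) 1 ∩ A)) := by
    ext y
    have hmem : ∀ x, y ∈ F x ↔
        y = |x| + 1 ∨ (|x| ≤ 1 ∧ (1 - |x| = y ∨ |x| - 1 = y)) := by
      intro x
      rcases lt_trichotomy |x| 1 with h | h | h
      · rw [hF3 x h]
        simp [h.le, eq_comm]
      · rw [hF2 x h]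
        simp [h, eq_comm]
      · rw [hF1 x h]
        simp [not_le.mpr h]
    simp only [mvImage, mem_setOf_eq, hmem, mem_union, mem_inter_iff, mem_Ici, mem_preimage,
      mem_image, mem_Icc, ← abs_le]
    constructor
    · rintro ⟨x, hx, rfl | ⟨h, h' | h'⟩⟩
      · left
        refine ⟨by linarith [abs_nonneg x], ?_⟩
        rcases abs_cases x with ⟨h, _⟩ | ⟨h, _⟩
        · left; simpa [h] using hx
        · right; simpa [h] using hx
      · exact Or.inr (Or.inl ⟨x, ⟨h, hx⟩, h'⟩)
      · exact Or.inr (Or.inr ⟨x, ⟨h, hx⟩, h'⟩)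
    · rintro (⟨h, h' | h'⟩ | ⟨x, ⟨h, hx⟩, h'⟩ | ⟨x, ⟨h, hx⟩, h'⟩)
      · exact ⟨y - 1, h', Or.inl (by rw [abs_of_nonneg (by linarith)]; ring)⟩
      · exact ⟨1 - y, h', Or.inl (by rw [abs_of_nonpos (by linarith)]; ring)⟩
      · exact ⟨x, hx, Or.inr ⟨h, Or.inl h'⟩⟩
      · exact ⟨x, hx, Or.inr ⟨h, Or.inr h'⟩⟩
  have hK : IsCompact (Icc (-1 : ℝ) 1 ∩ A) := isCompact_Icc.inter_right hA
  rw [key]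
  refine IsClosed.union (isClosed_Ici.inter (IsClosed.union ?_ ?_)) (IsClosed.union ?_ ?_)
  · exact hA.preimage (by fun_prop)
  · exact hA.preimage (by fun_prop)
  · exact (hK.image (by fun_prop)).isClosed
  · exact (hK.image (by fun_prop)).isClosed
end

section
/- Define the multivalued map F from ℝ to ℝ by F(x) = {|x|+1} if |x| > 1, F(x) = {|x|+1, 1−|x|} if |x| = 1, and F(x) = {|x|+1, 1−|x|, |x|−1} if |x| < 1. Then F is almost lower semicontinuous: for every open set B ⊆ ℝ, the full preimage F⁻(B) = {x ∈ ℝ : F(x) ∩ B ≠ ∅} is uniformly solid (its intersection with any open interval is either empty or contains an open interval). -/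
/-!
The map `F` is a union of three continuous branches: `|x| + 1` on all of `ℝ`, and `1 - |x|`,
`|x| - 1` on the open interval `|x| < 1`, the branch `1 - |x|` being also taken at the boundary
points `|x| = 1`. So every value of `F` at `x` is the value at `x` of a continuous function that
selects from `F` on an open set having `x` in its closure. By `exists_ball_of_selection`, points of
`F⁻(B)` near `x` then fill an open ball.
-/

open Metric Set Filter Topology

/-- If a continuous `g` selects from `F` on an open set `V`, and `g x ∈ B` at a point `x` of the
closure of `V`, then `V ∩ g ⁻¹' B ∩ ball c r` is a nonempty open subset of `F⁻(B) ∩ ball c r`. -/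
theorem exists_ball_of_selection {F : ℝ → Set ℝ} {B V : Set ℝ} {g : ℝ → ℝ} {x c r : ℝ}
    (hB : IsOpen B) (hV : IsOpen V) (hg : Continuous g) (hsel : ∀ z ∈ V, g z ∈ F z)
    (hxV : x ∈ closure V) (hxB : g x ∈ B) (hx : x ∈ ball c r) :
    ∃ c' : ℝ, ∃ r' : ℝ, 0 < r' ∧ ball c' r' ⊆ mvPreimage F B ∩ ball c r := by
  have hW : IsOpen (g ⁻¹' B ∩ ball c r) := (hB.preimage hg).inter isOpen_ball
  obtain ⟨z, hzW, hzV⟩ := mem_closure_iff.1 hxV _ hW ⟨hxB, hx⟩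
  obtain ⟨ε, hε, hsub⟩ := Metric.isOpen_iff.1 (hW.inter hV) z ⟨hzW, hzV⟩
  refine ⟨z, ε, hε, fun w hw => ?_⟩
  obtain ⟨⟨hwB, hwc⟩, hwV⟩ := hsub hw
  exact ⟨⟨g w, hsel w hwV, hwB⟩, hwc⟩

/-- the piecewise map is almost lower semicontinuous. -/
theorem statement12 (F : ℝ → Set ℝ)
    (hF1 : ∀ x : ℝ, 1 < |x| → F x = {|x| + 1})
    (hF2 : ∀ x : ℝ, |x| = 1 → F x = {|x| + 1, 1 - |x|})
    (hF3 : ∀ x : ℝ, |x| < 1 → F x = {|x| + 1, 1 - |x|, |x| - 1}) :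
    ∀ B : Set ℝ, IsOpen B → UniformlySolid (mvPreimage F B) := by
  rintro B hB c r - ⟨x, ⟨y, hyF, hyB⟩, hx⟩
  have hV : IsOpen {z : ℝ | |z| < 1} := isOpen_lt continuous_abs continuous_const
  have hcl : ∀ z : ℝ, |z| ≤ 1 → z ∈ closure {z : ℝ | |z| < 1} := by
    intro z hz
    have hball : {z : ℝ | |z| < 1} = ball 0 1 := by ext; simp
    rw [hball, closure_ball _ one_ne_zero]
    simpa using hz
  have upper : y = |x| + 1 → ∃ c' : ℝ, ∃ r' : ℝ, 0 < r' ∧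
      ball c' r' ⊆ mvPreimage F B ∩ ball c r := by
    rintro rfl
    refine exists_ball_of_selection (g := fun z => |z| + 1) hB isOpen_univ (by fun_prop)
      (fun z _ => ?_) (by simp) hyB hx
    rcases lt_trichotomy |z| 1 with h | h | h
    · simp [hF3 z h]
    · simp [hF2 z h]
    · simp [hF1 z h]
  have middle : |x| ≤ 1 → y = 1 - |x| → ∃ c' : ℝ, ∃ r' : ℝ, 0 < r' ∧
      ball c' r' ⊆ mvPreimage F B ∩ ball c r := by
    rintro h rfl
    exact exists_ball_of_selection (g := fun z => 1 - |z|) hB hV (by fun_prop)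
      (fun z hz => by simp [hF3 z hz]) (hcl x h) hyB hx
  have lower : |x| ≤ 1 → y = |x| - 1 → ∃ c' : ℝ, ∃ r' : ℝ, 0 < r' ∧
      ball c' r' ⊆ mvPreimage F B ∩ ball c r := by
    rintro h rfl
    exact exists_ball_of_selection (g := fun z => |z| - 1) hB hV (by fun_prop)
      (fun z hz => by simp [hF3 z hz]) (hcl x h) hyB hx
  rcases lt_trichotomy |x| 1 with h | h | h
  · rw [hF3 x h] at hyF
    rcases hyF with h1 | h1 | h1
    exacts [upper h1, middle h.le h1, lower h.le h1]
  · rw [hF2 x h] at hyF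
    rcases hyF with h1 | h1
    exacts [upper h1, middle h.le h1]
  · rw [hF1 x h] at hyF
    exact upper hyF
end
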